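/- If random variables α and β on a finite probability space are conditionally independent of order k, and γ is an arbitrary random variable on the same probability space, then H(γ) ≤ 2^k·H(γ|α) + 2^k·H(γ|β) − (2^{k+1} − 1)·H(γ|(α,β)); equivalently, I(γ:(α,β)) ≤ 2^k·I(γ:α|β) + 2^k·I(γ:β|α). -/

import Mathlib

open scoped BigOperators Classical

noncomputable section

/-- Probability of an event `E` under a distribution `μ` on a finite sample space `Ω`. -/
def pr {Ω : Type} [Fintype Ω] (μ : Ω → ℝ) (E : Ω → Prop) : ℝ :=
  ∑ ω, if E ω then μ ω else 0

/-- `μ` is a probability distribution on the finite space `Ω`. -/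
def IsProb {Ω : Type} [Fintype Ω] (μ : Ω → ℝ) : Prop :=
  (∀ ω, 0 ≤ μ ω) ∧ ∑ ω, μ ω = 1

/-- Shannon entropy (base 2) of a random variable `α` on a finite probability space. -/
def ent {Ω A : Type} [Fintype Ω] (μ : Ω → ℝ) (α : Ω → A) : ℝ :=
  -∑ a ∈ Finset.univ.image α,
      pr μ (fun ω => α ω = a) * Real.logb 2 (pr μ (fun ω => α ω = a))

/-- Conditional entropy `H(α | β)`. -/
def condEnt {Ω A B : Type} [Fintype Ω] (μ : Ω → ℝ) (α : Ω → A) (β : Ω → B) : ℝ :=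
  ent μ (fun ω => (α ω, β ω)) - ent μ β

/-- Mutual information `I(α : β)`. -/
def mutualInfo {Ω A B : Type} [Fintype Ω] (μ : Ω → ℝ) (α : Ω → A) (β : Ω → B) : ℝ :=
  ent μ α + ent μ β - ent μ (fun ω => (α ω, β ω))

/-- Conditional mutual information `I(α : β | γ)`. -/
def condMutualInfo {Ω A B C : Type} [Fintype Ω] (μ : Ω → ℝ)
    (α : Ω → A) (β : Ω → B) (γ : Ω → C) : ℝ :=
  condEnt μ α γ + condEnt μ β γ - condEnt μ (fun ω => (α ω, β ω)) γ

/-- Independence of two random variables. -/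
def Indep {Ω A B : Type} [Fintype Ω] (μ : Ω → ℝ) (α : Ω → A) (β : Ω → B) : Prop :=
  ∀ (a : A) (b : B),
    pr μ (fun ω => α ω = a ∧ β ω = b) =
      pr μ (fun ω => α ω = a) * pr μ (fun ω => β ω = b)

/-- Auxiliary form of "conditionally independent of order `k`" (explicit `Fintype`):
`α` and `β` are conditionally independent of order `0` if they are independent,
and of order `k + 1` if on some finite probability space there are random variables
`α₀, β₀, α*, β*` such that `(α₀, β₀)` has the same joint distribution as `(α, β)`,
`I(α₀ : β₀ | α*) = 0`, `I(α₀ : β₀ | β*) = 0`, and `α*, β*` are conditionally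
independent of order `k`. -/
def CondIndepOrderAux : ℕ → (Ω A B : Type) → Fintype Ω → (Ω → ℝ) → (Ω → A) → (Ω → B) → Prop
  | 0, _Ω, _A, _B, iΩ, μ, α, β => @Indep _ _ _ iΩ μ α β
  | k+1, _Ω, A, B, iΩ, μ, α, β =>
      ∃ (Ω' A' B' : Type) (iΩ' : Fintype Ω') (μ' : Ω' → ℝ)
        (α₀ : Ω' → A) (β₀ : Ω' → B) (αs : Ω' → A') (βs : Ω' → B'),
        @IsProb _ iΩ' μ' ∧
        (∀ (a : A) (b : B),
          @pr _ iΩ' μ' (fun ω => α₀ ω = a ∧ β₀ ω = b) =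
            @pr _ iΩ μ (fun ω => α ω = a ∧ β ω = b)) ∧
        @condMutualInfo _ _ _ _ iΩ' μ' α₀ β₀ αs = 0 ∧
        @condMutualInfo _ _ _ _ iΩ' μ' α₀ β₀ βs = 0 ∧
        CondIndepOrderAux k Ω' A' B' iΩ' μ' αs βs

/-- Random variables `α` and `β` on a finite probability space are
conditionally independent of order `k`. -/
def CondIndepOrder {Ω A B : Type} [iΩ : Fintype Ω]
    (μ : Ω → ℝ) (α : Ω → A) (β : Ω → B) (k : ℕ) : Prop :=
  CondIndepOrderAux k Ω A B iΩ μ α β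

/-- An `m × n` joint probability matrix: nonnegative entries summing to `1`. -/
def IsJointProbMatrix {m n : ℕ} (M : Matrix (Fin m) (Fin n) ℝ) : Prop :=
  (∀ i j, 0 ≤ M i j) ∧ ∑ i, ∑ j, M i j = 1

/-- `M` is the joint probability matrix of the pair `(α, β)`. -/
def IsJointMatrixOf {Ω : Type} [Fintype Ω] {m n : ℕ} (M : Matrix (Fin m) (Fin n) ℝ)
    (μ : Ω → ℝ) (α : Ω → Fin m) (β : Ω → Fin n) : Prop :=
  ∀ i j, M i j = pr μ (fun ω => α ω = i ∧ β ω = j)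

/-- `M` is a block matrix: rows and columns can be partitioned into two nonempty
parts so that the two diagonal blocks each contain a nonzero element and all
entries outside the diagonal blocks vanish. -/
def IsBlockMatrix {m n : ℕ} (M : Matrix (Fin m) (Fin n) ℝ) : Prop :=
  ∃ (I₁ : Finset (Fin m)) (J₁ : Finset (Fin n)),
    I₁.Nonempty ∧ I₁ᶜ.Nonempty ∧ J₁.Nonempty ∧ J₁ᶜ.Nonempty ∧
    (∃ i ∈ I₁, ∃ j ∈ J₁, M i j ≠ 0) ∧
    (∃ i ∈ I₁ᶜ, ∃ j ∈ J₁ᶜ, M i j ≠ 0) ∧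
    (∀ i j, ((i ∈ I₁ ∧ j ∈ J₁ᶜ) ∨ (i ∈ I₁ᶜ ∧ j ∈ J₁)) → M i j = 0)

/-- `M` is a good matrix: the joint probability matrix of some pair of
conditionally independent random variables (of some finite order). -/
def IsGoodMatrix {m n : ℕ} (M : Matrix (Fin m) (Fin n) ℝ) : Prop :=
  ∃ (Ω : Type) (iΩ : Fintype Ω) (μ : Ω → ℝ) (α : Ω → Fin m) (β : Ω → Fin n) (k : ℕ),
    @IsProb _ iΩ μ ∧ @IsJointMatrixOf _ iΩ _ _ M μ α β ∧
    @CondIndepOrder _ _ _ iΩ μ α β k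

/-- A stochastic matrix: nonnegative entries, all row sums equal to `1`. -/
def IsStochastic {m n : ℕ} (A : Matrix (Fin m) (Fin n) ℝ) : Prop :=
  (∀ i j, 0 ≤ A i j) ∧ ∀ i, ∑ j, A i j = 1

/-- The matrix `D_ε`: diagonal entries `1/2 - ε`, off-diagonal entries `ε`. -/
def Dmat (ε : ℝ) : Matrix (Fin 2) (Fin 2) ℝ :=
  fun i j => if i = j then 1/2 - ε else ε

/-- The distribution of `n` i.i.d. trials, each distributed according to `μ`. -/
def iidMeasure {Ω : Type} [Fintype Ω] (μ : Ω → ℝ) (n : ℕ) : (Fin n → Ω) → ℝ :=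
  fun ωv => ∏ i, μ (ωv i)

/-- The sequence of `n` coordinatewise copies of a random variable. -/
def iidRV {Ω A : Type} (α : Ω → A) (n : ℕ) : (Fin n → Ω) → (Fin n → A) :=
  fun ωv i => α (ωv i)

/-- `(u, v, w)` belongs to the rate region of the pair `(α, β)`. -/
def InRateRegion {Ω A B : Type} [Fintype Ω] (μ : Ω → ℝ) (α : Ω → A) (β : Ω → B)
    (u v w : ℝ) : Prop :=
  0 ≤ u ∧ 0 ≤ v ∧ 0 ≤ w ∧
  ∀ ε > (0:ℝ), ∀ δ > (0:ℝ), ∃ n₀ : ℕ, ∀ n ≥ n₀,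
    ∃ (t : (Fin n → A) × (Fin n → B) → (Fin ⌊(u + δ) * n⌋₊ → Bool))
      (f : (Fin n → A) × (Fin n → B) → (Fin ⌊(v + δ) * n⌋₊ → Bool))
      (g : (Fin n → A) × (Fin n → B) → (Fin ⌊(w + δ) * n⌋₊ → Bool))
      (r : (Fin ⌊(u + δ) * n⌋₊ → Bool) × (Fin ⌊(v + δ) * n⌋₊ → Bool) → (Fin n → A))
      (s : (Fin ⌊(u + δ) * n⌋₊ → Bool) × (Fin ⌊(w + δ) * n⌋₊ → Bool) → (Fin n → B)),
      pr (iidMeasure μ n) (fun ωv =>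
          r (t (iidRV α n ωv, iidRV β n ωv), f (iidRV α n ωv, iidRV β n ωv)) = iidRV α n ωv)
        > 1 - ε ∧
      pr (iidMeasure μ n) (fun ωv =>
          s (t (iidRV α n ωv, iidRV β n ωv), g (iidRV α n ωv, iidRV β n ωv)) = iidRV β n ωv)
        > 1 - ε

/-- The support of a matrix: the set of positions of its nonzero entries. -/
def msupport {m n : ℕ} (M : Matrix (Fin m) (Fin n) ℝ) : Set (Fin m × Fin n) :=
  {p | M p.1 p.2 ≠ 0}

/-- An r-matrix: nonnegative entries and rectangular support. -/
def IsRMatrix {m n : ℕ} (M : Matrix (Fin m) (Fin n) ℝ) : Prop :=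
  (∀ i j, 0 ≤ M i j) ∧ ∃ (A : Set (Fin m)) (B : Set (Fin n)), msupport M = A ×ˢ B

/-- An r-decomposition of `M`: an expression of `M` as a finite sum of r-matrices
such that the supports of consecutive summands intersect. -/
def IsRDecomposition {m n : ℕ} (M : Matrix (Fin m) (Fin n) ℝ)
    (l : ℕ) (Ms : Fin l → Matrix (Fin m) (Fin n) ℝ) : Prop :=
  M = ∑ i, Ms i ∧ (∀ i, IsRMatrix (Ms i)) ∧
  ∀ (i : ℕ) (h : i + 1 < l),
    (msupport (Ms ⟨i, Nat.lt_of_succ_lt h⟩) ∩ msupport (Ms ⟨i + 1, h⟩)).Nonempty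

end

/-!
Every two variables `α`, `β` satisfy `H(γ|s) ≤ H(γ|α) + H(γ|β) - H(γ|α,β,s) + I(α:β|s)`, which is
the nonnegativity of `I(α:β|γ,s)` together with `H(γ|α,s) ≤ H(γ|α)` and `H(γ|β,s) ≤ H(γ|β)`. With
`s` trivial this is the case of order `0`. For order `k + 1`, glue the space carrying `α*`, `β*`
to the given one along `(α₀, β₀) = (α, β)`, making `γ` independent of everything else given
`(α, β)`. There `H(γ|α*)` and `H(γ|β*)` are at most `H(γ|α) + H(γ|β) - H(γ|α,β)`, while
`H(γ|α*,β*)` is at least `H(γ|α,β)`; substituting this in the inequality of order `k` for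
`α*`, `β*` gives the one of order `k + 1`.
-/

open Finset Real

variable {Ω Ω' A B C D S : Type} [Fintype Ω] {μ : Ω → ℝ}

/-! ### Probabilities -/

lemma pr_nonneg (hμ : ∀ ω, 0 ≤ μ ω) (E : Ω → Prop) : 0 ≤ pr μ E :=
  sum_nonneg fun ω _ => by split_ifs <;> simp [hμ ω]

lemma pr_pos (hμ : ∀ ω, 0 ≤ μ ω) {E : Ω → Prop} {ω : Ω} (hω : μ ω ≠ 0) (hE : E ω) :
    0 < pr μ E :=
  sum_pos' (fun ω _ => by split_ifs <;> simp [hμ ω])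
    ⟨ω, mem_univ ω, by simpa [hE] using (hμ ω).lt_of_ne' hω⟩

lemma pr_congr_support {E F : Ω → Prop} (h : ∀ ω, μ ω ≠ 0 → (E ω ↔ F ω)) : pr μ E = pr μ F := by
  refine sum_congr rfl fun ω _ => ?_
  by_cases hω : μ ω = 0
  · simp [hω]
  · simp [h ω hω]

lemma pr_and (μ : Ω → ℝ) (E F : Ω → Prop) :
    pr μ (fun ω => E ω ∧ F ω) = ∑ ω, if E ω then if F ω then μ ω else 0 else 0 :=
  sum_congr rfl fun ω _ => by by_cases hE : E ω <;> simp [hE]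

lemma sum_pr_eq_and {X : Ω → A} {s : Finset A} (hs : ∀ ω, X ω ∈ s) (E : Ω → Prop) :
    ∑ x ∈ s, pr μ (fun ω => X ω = x ∧ E ω) = pr μ E := by
  simp only [pr_and]
  rw [sum_comm]
  simp [pr, hs]

lemma sum_pr_eq_mul {X : Ω → A} {s : Finset A} (hs : ∀ ω, X ω ∈ s) (f : A → ℝ) :
    ∑ x ∈ s, pr μ (fun ω => X ω = x) * f x = ∑ ω, μ ω * f (X ω) := by
  simp only [pr, sum_mul]
  rw [sum_comm]
  simp [ite_mul, hs]

/-- The conditional probability of `E` given `F`; it is `0` when `F` has probability `0`. -/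
noncomputable def condPr (μ : Ω → ℝ) (E F : Ω → Prop) : ℝ :=
  pr μ (fun ω => E ω ∧ F ω) / pr μ F

lemma condPr_nonneg (hμ : ∀ ω, 0 ≤ μ ω) (E F : Ω → Prop) : 0 ≤ condPr μ E F :=
  div_nonneg (pr_nonneg hμ _) (pr_nonneg hμ _)

lemma condPr_singleton (μ : Ω → ℝ) (F : Ω → Prop) (ω : Ω) :
    condPr μ (fun ω₁ => ω₁ = ω) F = (if F ω then μ ω else 0) / pr μ F := by
  rw [condPr, pr_and]
  simp

lemma condPr_eq_sum (μ : Ω → ℝ) (E F : Ω → Prop) :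
    condPr μ E F = ∑ ω, if E ω then condPr μ (fun ω₁ => ω₁ = ω) F else 0 := by
  simp only [condPr_singleton]
  rw [condPr, pr_and, sum_div]
  exact sum_congr rfl fun ω _ => by by_cases hE : E ω <;> simp [hE]

/-! ### Entropy -/

lemma ent_eq_neg_sum (μ : Ω → ℝ) (X : Ω → A) :
    ent μ X = -∑ ω, μ ω * logb 2 (pr μ fun ω₁ => X ω₁ = X ω) := by
  rw [ent, sum_pr_eq_mul (fun ω => mem_image_of_mem X (mem_univ ω))
    fun x => logb 2 (pr μ fun ω => X ω = x)]

lemma condEnt_eq_neg_sum (hμ : ∀ ω, 0 ≤ μ ω) (γ : Ω → C) (X : Ω → A) :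
    condEnt μ γ X =
      -∑ ω, μ ω * logb 2 (condPr μ (fun ω₁ => γ ω₁ = γ ω) (fun ω₁ => X ω₁ = X ω)) := by
  rw [condEnt, ent_eq_neg_sum, ent_eq_neg_sum, sub_eq_add_neg, ← neg_add, ← sub_eq_add_neg,
    ← sum_sub_distrib]
  congr 1
  refine sum_congr rfl fun ω _ => ?_
  obtain hω | hω := eq_or_ne (μ ω) 0
  · simp [hω]
  have joint_pos := pr_pos hμ hω (E := fun ω₁ => γ ω₁ = γ ω ∧ X ω₁ = X ω) ⟨rfl, rfl⟩
  have marginal_pos := pr_pos hμ hω (E := fun ω₁ => X ω₁ = X ω) rfl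
  simp only [Prod.mk.injEq]
  rw [condPr, logb_div joint_pos.ne' marginal_pos.ne', mul_sub]

lemma ent_congr_fibers {X : Ω → A} {Y : Ω → B} (h : ∀ ω ω₁, X ω = X ω₁ ↔ Y ω = Y ω₁) :
    ent μ X = ent μ Y := by
  simp only [ent_eq_neg_sum, h]

lemma ent_congr_support {X Y : Ω → A} (h : ∀ ω, μ ω ≠ 0 → X ω = Y ω) : ent μ X = ent μ Y := by
  rw [ent_eq_neg_sum, ent_eq_neg_sum]
  congr 1
  refine sum_congr rfl fun ω _ => ?_
  obtain hω | hω := eq_or_ne (μ ω) 0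
  · simp [hω]
  rw [h ω hω, pr_congr_support fun ω₁ hω₁ => by rw [h ω₁ hω₁]]

lemma condEnt_congr_support {X Y : Ω → A} (γ : Ω → C) (h : ∀ ω, μ ω ≠ 0 → X ω = Y ω) :
    condEnt μ γ X = condEnt μ γ Y := by
  rw [condEnt, condEnt, ent_congr_support h, ent_congr_support fun ω hω => by rw [h ω hω]]

lemma condEnt_prod_comm (μ : Ω → ℝ) (γ : Ω → C) (α : Ω → A) (β : Ω → B) :
    condEnt μ γ (fun ω => (β ω, α ω)) = condEnt μ γ (fun ω => (α ω, β ω)) :=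
  congrArg₂ (· - ·) (ent_congr_fibers fun _ _ => by simp only [Prod.mk.injEq]; tauto)
    (ent_congr_fibers fun _ _ => by simp only [Prod.mk.injEq]; tauto)

lemma mutualInfo_eq_ent_sub_condEnt (μ : Ω → ℝ) (γ : Ω → C) (X : Ω → A) :
    mutualInfo μ γ X = ent μ γ - condEnt μ γ X := by
  simp only [mutualInfo, condEnt]
  ring

lemma condMutualInfo_eq_condEnt_sub_condEnt (μ : Ω → ℝ) (γ : Ω → C) (α : Ω → A) (β : Ω → B) :
    condMutualInfo μ γ α β = condEnt μ γ β - condEnt μ γ (fun ω => (α ω, β ω)) := by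
  have assoc : ent μ (fun ω => ((γ ω, α ω), β ω)) = ent μ (fun ω => (γ ω, (α ω, β ω))) :=
    ent_congr_fibers fun _ _ => by simp only [Prod.mk.injEq, and_assoc]
  simp only [condMutualInfo, condEnt, assoc]
  ring

lemma Indep.mutualInfo_eq_zero (hμ : ∀ ω, 0 ≤ μ ω) {α : Ω → A} {β : Ω → B} (h : Indep μ α β) :
    mutualInfo μ α β = 0 := by
  rw [mutualInfo, sub_eq_zero, ent_eq_neg_sum, ent_eq_neg_sum, ent_eq_neg_sum, ← neg_add,
    ← sum_add_distrib]
  congr 1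
  refine sum_congr rfl fun ω _ => ?_
  obtain hω | hω := eq_or_ne (μ ω) 0
  · simp [hω]
  have hα := pr_pos hμ hω (E := fun ω₁ => α ω₁ = α ω) rfl
  have hβ := pr_pos hμ hω (E := fun ω₁ => β ω₁ = β ω) rfl
  simp only [Prod.mk.injEq]
  rw [h, logb_mul hα.ne' hβ.ne', mul_add]

/-! ### Shannon inequalities -/

lemma mul_log_sub_mul_log_le {p q : ℝ} (hp : 0 ≤ p) (hq : 0 ≤ q) (hpq : q = 0 → p = 0) :
    p * log q - p * log p ≤ q - p := by
  obtain rfl | hp := hp.eq_or_lt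
  · simpa using hq
  have hq : 0 < q := hq.lt_of_ne' fun h => hp.ne' (hpq h)
  calc p * log q - p * log p = p * log (q / p) := by rw [log_div hq.ne' hp.ne']; ring
    _ ≤ p * (q / p - 1) := by gcongr; exact log_le_sub_one_of_pos (by positivity)
    _ = q - p := by field_simp

lemma sum_mul_logb_le_sum_mul_logb {ι : Type*} {s : Finset ι} {p q : ι → ℝ} {b : ℝ} (hb : 1 < b)
    (hp : ∀ i ∈ s, 0 ≤ p i) (hq : ∀ i ∈ s, 0 ≤ q i) (hpq : ∀ i ∈ s, q i = 0 → p i = 0)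
    (hsum : ∑ i ∈ s, q i ≤ ∑ i ∈ s, p i) :
    ∑ i ∈ s, p i * logb b (q i) ≤ ∑ i ∈ s, p i * logb b (p i) := by
  simp only [logb, mul_div_assoc', ← sum_div]
  refine div_le_div_of_nonneg_right (sub_nonpos.mp ?_) (log_pos hb).le
  calc ∑ i ∈ s, p i * log (q i) - ∑ i ∈ s, p i * log (p i)
      = ∑ i ∈ s, (p i * log (q i) - p i * log (p i)) := by rw [sum_sub_distrib]
    _ ≤ ∑ i ∈ s, (q i - p i) :=
        sum_le_sum fun i hi => mul_log_sub_mul_log_le (hp i hi) (hq i hi) (hpq i hi)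
    _ ≤ 0 := by rw [sum_sub_distrib]; linarith

lemma ent_le_neg_sum_mul_logb (hμ : ∀ ω, 0 ≤ μ ω) {X : Ω → A} {s : Finset A} (hs : ∀ ω, X ω ∈ s)
    {q : A → ℝ} (hq : ∀ x ∈ s, 0 ≤ q x) (hq_pos : ∀ ω, μ ω ≠ 0 → 0 < q (X ω))
    (hq_sum : ∑ x ∈ s, q x ≤ ∑ ω, μ ω) :
    ent μ X ≤ -∑ ω, μ ω * logb 2 (q (X ω)) := by
  rw [ent_eq_neg_sum, neg_le_neg_iff, ← sum_pr_eq_mul hs fun x => logb 2 (q x),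
    ← sum_pr_eq_mul hs fun x => logb 2 (pr μ fun ω => X ω = x)]
  refine sum_mul_logb_le_sum_mul_logb one_lt_two (fun x _ => pr_nonneg hμ _) hq
    (fun x _ hqx => ?_) (hq_sum.trans_eq ?_)
  · refine sum_eq_zero fun ω _ => ite_eq_right_iff.mpr ?_
    rintro rfl
    by_contra hω
    exact (hq_pos ω hω).ne' hqx
  · simpa using (sum_pr_eq_mul hs fun _ => 1).symm

/-- The mass function of the triple `(a, b, c)` made conditionally independent given `c`, with the
pairs `(a, c)` and `(b, c)` keeping their laws; it is `0` where `c` has probability `0`. -/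
noncomputable def condIndepMass (μ : Ω → ℝ) (a : Ω → A) (b : Ω → B) (c : Ω → C)
    (t : A × B × C) : ℝ :=
  pr μ (fun ω => a ω = t.1 ∧ c ω = t.2.2) * pr μ (fun ω => b ω = t.2.1 ∧ c ω = t.2.2) /
    pr μ (fun ω => c ω = t.2.2)

lemma condIndepMass_nonneg (hμ : ∀ ω, 0 ≤ μ ω) (a : Ω → A) (b : Ω → B) (c : Ω → C)
    (t : A × B × C) : 0 ≤ condIndepMass μ a b c t :=
  div_nonneg (mul_nonneg (pr_nonneg hμ _) (pr_nonneg hμ _)) (pr_nonneg hμ _)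

lemma sum_condIndepMass {a : Ω → A} {b : Ω → B} {c : Ω → C} {s : Finset A} {t : Finset B}
    {u : Finset C} (ha : ∀ ω, a ω ∈ s) (hb : ∀ ω, b ω ∈ t) (hc : ∀ ω, c ω ∈ u) :
    ∑ x ∈ s ×ˢ t ×ˢ u, condIndepMass μ a b c x = ∑ ω, μ ω := by
  calc ∑ x ∈ s ×ˢ t ×ˢ u, condIndepMass μ a b c x
      = ∑ z ∈ u, (∑ x ∈ s, pr μ fun ω => a ω = x ∧ c ω = z) *
          (∑ y ∈ t, pr μ fun ω => b ω = y ∧ c ω = z) / pr μ fun ω => c ω = z := by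
        rw [sum_product, sum_congr rfl fun x _ => sum_product_right _ _ _, sum_comm]
        simp only [condIndepMass, sum_mul_sum, sum_div]
    _ = ∑ z ∈ u, pr μ fun ω => c ω = z := by
        simp only [sum_pr_eq_and ha, sum_pr_eq_and hb, mul_self_div_self]
    _ = ∑ ω, μ ω := by simpa using sum_pr_eq_mul hc fun _ => 1

lemma ent_prod_prod_add_ent_le (hμ : ∀ ω, 0 ≤ μ ω) (a : Ω → A) (b : Ω → B) (c : Ω → C) :
    ent μ (fun ω => (a ω, b ω, c ω)) + ent μ c ≤
      ent μ (fun ω => (a ω, c ω)) + ent μ (fun ω => (b ω, c ω)) := by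
  have mem_image {T : Type} (X : Ω → T) (ω : Ω) : X ω ∈ univ.image X :=
    mem_image_of_mem X (mem_univ ω)
  have gibbs := ent_le_neg_sum_mul_logb hμ
    (fun ω => mk_mem_product (mem_image a ω) (mk_mem_product (mem_image b ω) (mem_image c ω)))
    (fun x _ => condIndepMass_nonneg hμ a b c x)
    (fun ω hω => div_pos (mul_pos (pr_pos hμ hω ⟨rfl, rfl⟩) (pr_pos hμ hω ⟨rfl, rfl⟩))
      (pr_pos hμ hω rfl))
    (sum_condIndepMass (mem_image a) (mem_image b) (mem_image c)).le
  rw [← le_sub_iff_add_le]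
  refine gibbs.trans_eq ?_
  rw [ent_eq_neg_sum, ent_eq_neg_sum, ent_eq_neg_sum, ← neg_add, ← sum_add_distrib,
    ← neg_sub', ← sum_sub_distrib]
  congr 1
  refine sum_congr rfl fun ω _ => ?_
  obtain hω | hω := eq_or_ne (μ ω) 0
  · simp [hω]
  have hac := pr_pos hμ hω (E := fun ω₁ => a ω₁ = a ω ∧ c ω₁ = c ω) ⟨rfl, rfl⟩
  have hbc := pr_pos hμ hω (E := fun ω₁ => b ω₁ = b ω ∧ c ω₁ = c ω) ⟨rfl, rfl⟩
  have hc := pr_pos hμ hω (E := fun ω₁ => c ω₁ = c ω) rfl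
  simp only [condIndepMass, Prod.mk.injEq]
  rw [logb_div (mul_pos hac hbc).ne' hc.ne', logb_mul hac.ne' hbc.ne']
  ring

lemma condEnt_le_condEnt_comp (hμ : ∀ ω, 0 ≤ μ ω) (γ : Ω → C) (X : Ω → A) (f : A → B) :
    condEnt μ γ X ≤ condEnt μ γ (fun ω => f (X ω)) := by
  have submodular := ent_prod_prod_add_ent_le hμ γ X (fun ω => f (X ω))
  have drop_triple : ent μ (fun ω => (γ ω, X ω, f (X ω))) = ent μ (fun ω => (γ ω, X ω)) :=
    ent_congr_fibers fun _ _ => by simp +contextual [Prod.mk.injEq]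
  have drop_pair : ent μ (fun ω => (X ω, f (X ω))) = ent μ X :=
    ent_congr_fibers fun _ _ => by simp +contextual [Prod.mk.injEq]
  simp only [condEnt]
  linarith

lemma ent_le_condEnt_add_condEnt (hμ : ∀ ω, 0 ≤ μ ω) (α : Ω → A) (β : Ω → B) (γ : Ω → C) :
    ent μ γ ≤ condEnt μ γ α + condEnt μ γ β - condEnt μ γ (fun ω => (α ω, β ω)) +
      mutualInfo μ α β := by
  have submodular := ent_prod_prod_add_ent_le hμ α β γ
  have rotate : ent μ (fun ω => (α ω, β ω, γ ω)) = ent μ (fun ω => (γ ω, α ω, β ω)) :=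
    ent_congr_fibers fun _ _ => by simp only [Prod.mk.injEq]; tauto
  have swap_α : ent μ (fun ω => (α ω, γ ω)) = ent μ (fun ω => (γ ω, α ω)) :=
    ent_congr_fibers fun _ _ => by simp only [Prod.mk.injEq, and_comm]
  have swap_β : ent μ (fun ω => (β ω, γ ω)) = ent μ (fun ω => (γ ω, β ω)) :=
    ent_congr_fibers fun _ _ => by simp only [Prod.mk.injEq, and_comm]
  simp only [mutualInfo, condEnt]
  linarith

lemma condEnt_le_condEnt_add_condEnt (hμ : ∀ ω, 0 ≤ μ ω) (α : Ω → A) (β : Ω → B) (γ : Ω → C)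
    (s : Ω → S) :
    condEnt μ γ s ≤ condEnt μ γ α + condEnt μ γ β - condEnt μ γ (fun ω => ((α ω, β ω), s ω)) +
      condMutualInfo μ α β s := by
  have submodular := ent_prod_prod_add_ent_le hμ α β (fun ω => (γ ω, s ω))
  have drop_α := condEnt_le_condEnt_comp hμ γ (fun ω => (α ω, s ω)) Prod.fst
  have drop_β := condEnt_le_condEnt_comp hμ γ (fun ω => (β ω, s ω)) Prod.fst
  have rotate : ent μ (fun ω => (α ω, β ω, γ ω, s ω)) = ent μ (fun ω => (γ ω, (α ω, β ω), s ω)) :=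
    ent_congr_fibers fun _ _ => by simp only [Prod.mk.injEq]; tauto
  have swap_α : ent μ (fun ω => (α ω, γ ω, s ω)) = ent μ (fun ω => (γ ω, α ω, s ω)) :=
    ent_congr_fibers fun _ _ => by simp only [Prod.mk.injEq, and_left_comm]
  have swap_β : ent μ (fun ω => (β ω, γ ω, s ω)) = ent μ (fun ω => (γ ω, β ω, s ω)) :=
    ent_congr_fibers fun _ _ => by simp only [Prod.mk.injEq, and_left_comm]
  simp only [condMutualInfo, condEnt] at drop_α drop_β ⊢
  linarith

/-! ### Extensions of a probability space -/

section Extension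

/-- The map `φ` carries the distribution `ν` to `μ`, so that `(Ω', ν)` is an extension of `(Ω, μ)`
and random variables on `Ω` are lifted along `φ` without changing their joint laws. -/
def IsExtension [Fintype Ω'] (φ : Ω' → Ω) (ν : Ω' → ℝ) (μ : Ω → ℝ) : Prop :=
  ∀ ω, pr ν (fun p => φ p = ω) = μ ω

variable [Fintype Ω']

namespace IsExtension

variable {φ : Ω' → Ω} {ν : Ω' → ℝ}

lemma sum_mul_comp (hφ : IsExtension φ ν μ) (f : Ω → ℝ) :
    ∑ p, ν p * f (φ p) = ∑ ω, μ ω * f ω := by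
  rw [← sum_pr_eq_mul (s := univ) (fun p => mem_univ (φ p)) f]
  exact sum_congr rfl fun ω _ => by rw [hφ ω]

lemma pr_comp (hφ : IsExtension φ ν μ) (E : Ω → Prop) : pr ν (fun p => E (φ p)) = pr μ E := by
  simpa [pr] using hφ.sum_mul_comp fun ω => if E ω then 1 else 0

lemma ent_comp (hφ : IsExtension φ ν μ) (X : Ω → A) : ent ν (fun p => X (φ p)) = ent μ X := by
  rw [ent_eq_neg_sum, ent_eq_neg_sum,
    ← hφ.sum_mul_comp fun ω => logb 2 (pr μ fun ω₁ => X ω₁ = X ω)]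
  congr 1
  exact sum_congr rfl fun p _ => by rw [hφ.pr_comp fun ω => X ω = X (φ p)]

lemma condEnt_comp (hφ : IsExtension φ ν μ) (γ : Ω → C) (X : Ω → A) :
    condEnt ν (fun p => γ (φ p)) (fun p => X (φ p)) = condEnt μ γ X :=
  congrArg₂ (· - ·) (hφ.ent_comp fun ω => (γ ω, X ω)) (hφ.ent_comp X)

lemma condMutualInfo_comp (hφ : IsExtension φ ν μ) (α : Ω → A) (β : Ω → B) (s : Ω → S) :
    condMutualInfo ν (fun p => α (φ p)) (fun p => β (φ p)) (fun p => s (φ p)) =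
      condMutualInfo μ α β s :=
  congrArg₂ (· - ·) (congrArg₂ (· + ·) (hφ.condEnt_comp α s) (hφ.condEnt_comp β s))
    (hφ.condEnt_comp (fun ω => (α ω, β ω)) s)

lemma condIndepOrder_comp (hφ : IsExtension φ ν μ) {α : Ω → A} {β : Ω → B} {k : ℕ}
    (h : CondIndepOrder μ α β k) :
    CondIndepOrder ν (fun p => α (φ p)) (fun p => β (φ p)) k := by
  cases k with
  | zero =>
    intro x y
    rw [hφ.pr_comp fun ω => α ω = x ∧ β ω = y, hφ.pr_comp fun ω => α ω = x,
      hφ.pr_comp fun ω => β ω = y]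
    exact h x y
  | succ k =>
    obtain ⟨Ω₁, A₁, B₁, _, μ₁, α₀, β₀, αs, βs, hμ₁, hlaw, hαs, hβs, hk⟩ := h
    refine ⟨Ω₁, A₁, B₁, _, μ₁, α₀, β₀, αs, βs, hμ₁, fun x y => ?_, hαs, hβs, hk⟩
    rw [hlaw, hφ.pr_comp fun ω => α ω = x ∧ β ω = y]

end IsExtension

end Extension

/-! ### Gluing two spaces along a common law -/

/-- The relatively independent coupling of two spaces over variables `X₀` and `X` with a common
law: draw `ω'` from `μ'`, then `ω` from `μ` conditioned on the event `X₀ ω' = X ω`. -/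
noncomputable def glue (μ' : Ω' → ℝ) (X₀ : Ω' → D) (μ : Ω → ℝ) (X : Ω → D) (p : Ω' × Ω) : ℝ :=
  μ' p.1 * condPr μ (fun ω => ω = p.2) (fun ω => X ω = X₀ p.1)

section Glue

variable {μ' : Ω' → ℝ} {X₀ : Ω' → D} {X : Ω → D}

lemma glue_nonneg (hμ' : ∀ ω', 0 ≤ μ' ω') (hμ : ∀ ω, 0 ≤ μ ω) (p : Ω' × Ω) :
    0 ≤ glue μ' X₀ μ X p :=
  mul_nonneg (hμ' _) (condPr_nonneg hμ _ _)

lemma eq_of_glue_ne_zero {p : Ω' × Ω} (hp : glue μ' X₀ μ X p ≠ 0) : X₀ p.1 = X p.2 := by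
  by_contra h
  exact hp (by rw [glue, condPr_singleton, if_neg (Ne.symm h), zero_div, mul_zero])

variable [Fintype Ω']

lemma pr_glue (μ' : Ω' → ℝ) (X₀ : Ω' → D) (μ : Ω → ℝ) (X : Ω → D) (E : Ω' → Ω → Prop) :
    pr (glue μ' X₀ μ X) (fun p => E p.1 p.2) =
      ∑ ω', μ' ω' * condPr μ (E ω') (fun ω => X ω = X₀ ω') := by
  rw [pr, Fintype.sum_prod_type]
  simp only [condPr_eq_sum μ (E _), mul_sum, mul_ite, mul_zero, glue]

lemma pr_glue_and_fst_eq (μ' : Ω' → ℝ) (X₀ : Ω' → D) (μ : Ω → ℝ) (X : Ω → D) (E : Ω → Prop)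
    (ω' : Ω') :
    pr (glue μ' X₀ μ X) (fun p => E p.2 ∧ p.1 = ω') =
      μ' ω' * condPr μ E (fun ω => X ω = X₀ ω') := by
  rw [pr_glue μ' X₀ μ X fun ω₁ ω => E ω ∧ ω₁ = ω', sum_eq_single_of_mem ω' (mem_univ ω')]
  · simp only [and_true]
  · intro ω₁ _ hne
    simp [condPr, pr, hne]

/-- The random variables `X₀` on `(Ω', μ')` and `X` on `(Ω, μ)` have the same law. -/
def IdentLaw (μ' : Ω' → ℝ) (X₀ : Ω' → D) (μ : Ω → ℝ) (X : Ω → D) : Prop :=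
  ∀ x, pr μ' (fun ω' => X₀ ω' = x) = pr μ (fun ω => X ω = x)

namespace IdentLaw

lemma isExtension_fst_glue (h : IdentLaw μ' X₀ μ X) (hμ' : ∀ ω', 0 ≤ μ' ω') :
    IsExtension Prod.fst (glue μ' X₀ μ X) μ' := by
  intro ω'
  have total := pr_glue_and_fst_eq μ' X₀ μ X (fun _ => True) ω'
  simp only [true_and, condPr] at total
  rw [total]
  obtain hω' | hω' := eq_or_ne (μ' ω') 0
  · simp [hω']
  have : 0 < pr μ (fun ω => X ω = X₀ ω') := h (X₀ ω') ▸ pr_pos hμ' hω' rfl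
  rw [div_self this.ne', mul_one]

lemma isExtension_snd_glue (h : IdentLaw μ' X₀ μ X) (hμ : ∀ ω, 0 ≤ μ ω) :
    IsExtension Prod.snd (glue μ' X₀ μ X) μ := by
  intro ω
  have summand (ω' : Ω') : μ' ω' * condPr μ (fun ω₁ => ω₁ = ω) (fun ω₁ => X ω₁ = X₀ ω') =
      (if X₀ ω' = X ω then μ' ω' else 0) * (μ ω / pr μ fun ω₁ => X ω₁ = X ω) := by
    rw [condPr_singleton]
    by_cases hX : X₀ ω' = X ω
    · simp [hX]
    · simp [hX, Ne.symm hX]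
  rw [pr_glue μ' X₀ μ X fun _ ω₁ => ω₁ = ω, sum_congr rfl fun ω' _ => summand ω', ← sum_mul]
  change pr μ' (fun ω' => X₀ ω' = X ω) * _ = _
  rw [h (X ω)]
  obtain hω | hω := eq_or_ne (μ ω) 0
  · simp [hω]
  exact mul_div_cancel₀ _ (pr_pos hμ hω (E := fun ω₁ => X ω₁ = X ω) rfl).ne'

lemma condEnt_glue_fst (h : IdentLaw μ' X₀ μ X) (hμ' : ∀ ω', 0 ≤ μ' ω') (hμ : ∀ ω, 0 ≤ μ ω)
    (γ : Ω → C) : condEnt (glue μ' X₀ μ X) (fun p => γ p.2) Prod.fst = condEnt μ γ X := by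
  rw [condEnt_eq_neg_sum (glue_nonneg hμ' hμ), condEnt_eq_neg_sum hμ,
    ← (h.isExtension_snd_glue hμ).sum_mul_comp]
  congr 1
  refine sum_congr rfl fun p _ => ?_
  obtain hp | hp := eq_or_ne (glue μ' X₀ μ X p) 0
  · simp [hp]
  have hμ'p : μ' p.1 ≠ 0 := left_ne_zero_of_mul hp
  rw [condPr, pr_glue_and_fst_eq μ' X₀ μ X (fun ω => γ ω = γ p.2), h.isExtension_fst_glue hμ',
    mul_div_cancel_left₀ _ hμ'p, eq_of_glue_ne_zero hp]

lemma condEnt_glue_comp_fst (h : IdentLaw μ' X₀ μ X) (hμ : ∀ ω, 0 ≤ μ ω) (γ : Ω → C)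
    (f : D → B) :
    condEnt (glue μ' X₀ μ X) (fun p => γ p.2) (fun p => f (X₀ p.1)) =
      condEnt μ γ (fun ω => f (X ω)) := by
  rw [← (h.isExtension_snd_glue hμ).condEnt_comp]
  exact condEnt_congr_support _ fun p hp => congrArg f (eq_of_glue_ne_zero hp)

lemma condEnt_le_condEnt_glue (h : IdentLaw μ' X₀ μ X) (hμ' : ∀ ω', 0 ≤ μ' ω')
    (hμ : ∀ ω, 0 ≤ μ ω) (γ : Ω → C) (s : Ω' → S) :
    condEnt μ γ X ≤ condEnt (glue μ' X₀ μ X) (fun p => γ p.2) (fun p => s p.1) :=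
  h.condEnt_glue_fst hμ' hμ γ ▸
    condEnt_le_condEnt_comp (glue_nonneg hμ' hμ) (fun p => γ p.2) Prod.fst s

lemma condEnt_glue_le {α₀ : Ω' → A} {β₀ : Ω' → B} {α : Ω → A} {β : Ω → B}
    (h : IdentLaw μ' (fun ω' => (α₀ ω', β₀ ω')) μ (fun ω => (α ω, β ω)))
    (hμ' : ∀ ω', 0 ≤ μ' ω') (hμ : ∀ ω, 0 ≤ μ ω) (γ : Ω → C) (s : Ω' → S) :
    condEnt (glue μ' (fun ω' => (α₀ ω', β₀ ω')) μ (fun ω => (α ω, β ω)))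
        (fun p => γ p.2) (fun p => s p.1) ≤
      condEnt μ γ α + condEnt μ γ β - condEnt μ γ (fun ω => (α ω, β ω)) +
        condMutualInfo μ' α₀ β₀ s := by
  have bound := condEnt_le_condEnt_add_condEnt
    (glue_nonneg (X₀ := fun ω' => (α₀ ω', β₀ ω')) (X := fun ω => (α ω, β ω)) hμ' hμ)
    (fun p => α₀ p.1) (fun p => β₀ p.1) (fun p => γ p.2) (fun p => s p.1)
  rw [(h.isExtension_fst_glue hμ').condMutualInfo_comp,
    h.condEnt_glue_comp_fst hμ γ Prod.fst, h.condEnt_glue_comp_fst hμ γ Prod.snd] at bound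
  have markov := h.condEnt_le_condEnt_glue hμ' hμ γ fun ω' => ((α₀ ω', β₀ ω'), s ω')
  linarith

end IdentLaw

end Glue

/-! ### Conditional independence of order `k` -/

lemma ent_le_iff_mutualInfo_le (μ : Ω → ℝ) (α : Ω → A) (β : Ω → B) (γ : Ω → C) (c : ℝ) :
    ent μ γ ≤ c * condEnt μ γ α + c * condEnt μ γ β -
        (c * 2 - 1) * condEnt μ γ (fun ω => (α ω, β ω)) ↔
      mutualInfo μ γ (fun ω => (α ω, β ω)) ≤
        c * condMutualInfo μ γ α β + c * condMutualInfo μ γ β α := by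
  rw [mutualInfo_eq_ent_sub_condEnt, condMutualInfo_eq_condEnt_sub_condEnt,
    condMutualInfo_eq_condEnt_sub_condEnt, condEnt_prod_comm μ γ α β]
  constructor <;> intro h <;> linarith

lemma CondIndepOrder.ent_le {k : ℕ} (hμ : ∀ ω, 0 ≤ μ ω) {α : Ω → A} {β : Ω → B}
    (h : CondIndepOrder μ α β k) (γ : Ω → C) :
    ent μ γ ≤ 2 ^ k * condEnt μ γ α + 2 ^ k * condEnt μ γ β -
      (2 ^ (k + 1) - 1) * condEnt μ γ (fun ω => (α ω, β ω)) := by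
  induction k generalizing Ω A B with
  | zero =>
    have bound := ent_le_condEnt_add_condEnt hμ α β γ
    rw [Indep.mutualInfo_eq_zero hμ h] at bound
    simp only [pow_zero, zero_add, pow_one]
    linarith
  | succ k ih =>
    obtain ⟨Ω', A', B', _, μ', α₀, β₀, αs, βs, ⟨hμ', -⟩, hlaw, hαs, hβs, hk⟩ := h
    have law : IdentLaw μ' (fun ω' => (α₀ ω', β₀ ω')) μ (fun ω => (α ω, β ω)) := fun x => by
      simpa only [Prod.ext_iff] using hlaw x.1 x.2
    have bound := ih (glue_nonneg hμ' hμ)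
      ((law.isExtension_fst_glue hμ').condIndepOrder_comp hk) (fun p => γ p.2)
    rw [(law.isExtension_snd_glue hμ).ent_comp] at bound
    have bound_αs := law.condEnt_glue_le hμ' hμ γ αs
    have bound_βs := law.condEnt_glue_le hμ' hμ γ βs
    rw [hαs, add_zero] at bound_αs
    rw [hβs, add_zero] at bound_βs
    have bound_pair := law.condEnt_le_condEnt_glue hμ' hμ γ fun ω' => (αs ω', βs ω')
    have coeff_nonneg : (0 : ℝ) ≤ 2 ^ (k + 1) - 1 := sub_nonneg.mpr (one_le_pow₀ one_le_two)
    calc ent μ γ ≤ _ := bound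
      _ ≤ 2 ^ k * (condEnt μ γ α + condEnt μ γ β - condEnt μ γ (fun ω => (α ω, β ω))) +
          2 ^ k * (condEnt μ γ α + condEnt μ γ β - condEnt μ γ (fun ω => (α ω, β ω))) -
          (2 ^ (k + 1) - 1) * condEnt μ γ (fun ω => (α ω, β ω)) := by gcongr
      _ = _ := by ring

/-- If `α` and `β` are conditionally independent of order `k` and `γ` is
arbitrary, then `H(γ) ≤ 2^k·H(γ|α) + 2^k·H(γ|β) − (2^{k+1} − 1)·H(γ|(α,β))`;
equivalently, `I(γ:(α,β)) ≤ 2^k·I(γ:α|β) + 2^k·I(γ:β|α)`. -/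
theorem ent_le_of_condIndepOrder_improved {Ω A B C : Type} [Fintype Ω]
    (μ : Ω → ℝ) (hμ : IsProb μ) (α : Ω → A) (β : Ω → B) (γ : Ω → C) (k : ℕ)
    (h : CondIndepOrder μ α β k) :
    (ent μ γ ≤ (2:ℝ) ^ k * condEnt μ γ α + (2:ℝ) ^ k * condEnt μ γ β
        - ((2:ℝ) ^ (k + 1) - 1) * condEnt μ γ (fun ω => (α ω, β ω))) ∧
    (mutualInfo μ γ (fun ω => (α ω, β ω)) ≤
        (2:ℝ) ^ k * condMutualInfo μ γ α β + (2:ℝ) ^ k * condMutualInfo μ γ β α) := by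
  have ent_le := h.ent_le hμ.1 γ
  refine ⟨ent_le, (ent_le_iff_mutualInfo_le μ α β γ (2 ^ k)).mp ?_⟩
  rwa [← pow_succ]
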